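/- arXiv:2111.14026 — 2 statements merged into one kernel-verified Lean document; each statement's English description precedes it below -/
import Mathlib

section
/- If n ≥ q + 1 and C ⊆ [q]^n is a code of size M with at least two codewords and insdel distance d_I(C) = 2n − 2, then M ≤ q. In other words, I_q(n, 2n−2) ≤ q for n ≥ q + 1. -/
/-!
A word of length `n ≥ q + 1` over `q` letters uses some letter `a` at least twice, so `aa` is a
subsequence of it. If two codewords at insdel distance at least `2n - 2` (that is, with longest
common subsequence of length at most one) shared such a letter `a`, then `aa` would be a common
subsequence of length two. Choosing a repeated letter for each codeword is thus an injection
of the code into the alphabet.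
-/

open scoped BigOperators

/-- Length of a longest common subsequence of two words of length `n`. -/
noncomputable def lcsLen {α : Type*} {n : ℕ} (u v : Fin n → α) : ℕ :=
  sSup {ℓ : ℕ | ∃ w : List α, w.length = ℓ ∧ w.Sublist (List.ofFn u) ∧ w.Sublist (List.ofFn v)}

/-- Insdel distance between two words of length `n`: `d_I(u,v) = 2n - 2·ℓ_LCS(u,v)`. -/
noncomputable def insdelDist {α : Type*} {n : ℕ} (u v : Fin n → α) : ℕ :=
  2 * n - 2 * lcsLen u v

/-- Minimum insdel distance of a code. -/
noncomputable def insdelDistSet {α : Type*} {n : ℕ} (C : Set (Fin n → α)) : ℕ :=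
  sInf {d : ℕ | ∃ u ∈ C, ∃ v ∈ C, u ≠ v ∧ insdelDist u v = d}

/-- Minimum Hamming distance of a code. -/
noncomputable def hammingDistSet {α : Type*} {n : ℕ} [DecidableEq α] (C : Set (Fin n → α)) : ℕ :=
  sInf {d : ℕ | ∃ u ∈ C, ∃ v ∈ C, u ≠ v ∧ hammingDist u v = d}


/-- `I_q(n,d)`: the largest size of a code in `[q]^n` with insdel distance at least `d`. -/
noncomputable def maxInsdelSize (q n d : ℕ) : ℕ :=
  sSup {M : ℕ | ∃ C : Finset (Fin n → Fin q), C.card = M ∧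
    ∀ u ∈ C, ∀ v ∈ C, u ≠ v → d ≤ insdelDist u v}

lemma two_le_lcsLen {α : Type*} {n : ℕ} {u v : Fin n → α} {a : α}
    (hu : [a, a].Sublist (List.ofFn u)) (hv : [a, a].Sublist (List.ofFn v)) :
    2 ≤ lcsLen u v := by
  refine le_csSup ⟨n, ?_⟩ ⟨[a, a], rfl, hu, hv⟩
  rintro _ ⟨w, rfl, hw, -⟩
  simpa using hw.length_le

lemma exists_repeated_letter {q n : ℕ} (hn : q + 1 ≤ n) (u : Fin n → Fin q) :
    ∃ a, [a, a].Sublist (List.ofFn u) := by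
  simp only [← List.duplicate_iff_sublist]
  rw [List.exists_duplicate_iff_not_nodup, List.nodup_ofFn]
  intro h
  have := Fintype.card_le_of_injective u h
  simp only [Fintype.card_fin] at this
  omega

lemma card_le_of_insdelDist {q n : ℕ} (hq : 2 ≤ q) (hn : q + 1 ≤ n)
    (C : Finset (Fin n → Fin q))
    (hC : ∀ u ∈ C, ∀ v ∈ C, u ≠ v → 2 * n - 2 ≤ insdelDist u v) : C.card ≤ q := by
  choose f hf using fun u : Fin n → Fin q => exists_repeated_letter hn u
  have hinj : Set.InjOn f C := by
    intro u hu v hv huv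
    by_contra hne
    have h1 := hC u hu v hv hne
    have h2 := two_le_lcsLen (hf u) (huv ▸ hf v)
    unfold insdelDist at h1
    omega
  simpa using Finset.card_le_card_of_injOn f (fun _ _ => Finset.mem_univ _) hinj

/-- If `n ≥ q + 1` and `C ⊆ [q]^n` has at least two codewords and insdel distance `2n - 2`,
then `|C| ≤ q`; in other words `I_q(n, 2n-2) ≤ q` for `n ≥ q + 1`. -/
theorem size_bound_insdel_large_length (q n : ℕ) (hq : 2 ≤ q) (hn : q + 1 ≤ n) :
    (∀ C : Finset (Fin n → Fin q), 2 ≤ C.card →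
      insdelDistSet (C : Set (Fin n → Fin q)) = 2 * n - 2 →
      C.card ≤ q) ∧
    maxInsdelSize q n (2 * n - 2) ≤ q := by
  constructor
  · intro C _ hd
    refine card_le_of_insdelDist hq hn C fun u hu v hv hne => ?_
    rw [← hd]
    exact Nat.sInf_le ⟨u, hu, v, hv, hne, rfl⟩
  · refine csSup_le' ?_
    rintro _ ⟨C, rfl, hC⟩
    exact card_le_of_insdelDist hq hn C hC
end

section
/- If A ⊆ J_q(n) is a constant-weight L¹-code of size M with at least two elements and minimum L¹-distance d = 2δ, then there exists a code C ⊆ [q]^n of size M with insdel distance d = 2δ; indeed, C = ψ(A) has these parameters. -/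
/-!
The words `ψ(a)` and `ψ(b)` are nondecreasing, so a longest common subsequence is the
nondecreasing word `ψ(min(a, b))`: it is a subsequence of both (`psiList_sublist`), and no common
subsequence can contain a symbol `i` more than `min (a i) (b i)` times. Hence the LCS length is
`∑ i, min (a i) (b i)` (`lcsLen_psi`). Together with `|x - y| = x + y - 2 min(x, y)` and
`∑ a = ∑ b = n` this says that `ψ` is an isometry from the `L¹`-distance to the insdel distance
(`insdelDist_psi`). As `ψ` is also injective, `C = ψ(A)` has the required size and distance.
-/

open scoped BigOperators

/-- The list consisting of `a 0` copies of `0`, then `a 1` copies of `1`, etc. -/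
def psiList (q : ℕ) (a : Fin q → ℕ) : List (Fin q) :=
  (List.ofFn fun i : Fin q => List.replicate (a i) i).flatten

theorem psiList_length {q n : ℕ} (a : Fin q → ℕ) (ha : ∑ i, a i = n) :
    (psiList q a).length = n := by
  simp [psiList, Function.comp_def, List.sum_ofFn, ha]

/-- The map `ψ : J_q(n) → [q]^n` sending `(a_1,…,a_q)` to the nondecreasing word with
`a_i` copies of the symbol `i`. -/
def psi {q n : ℕ} (a : Fin q → ℕ) (ha : ∑ i, a i = n) : Fin n → Fin q :=
  fun j => (psiList q a).get (Fin.cast (psiList_length a ha).symm j)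

theorem psiList_eq_flatMap {q : ℕ} (a : Fin q → ℕ) :
    psiList q a = (List.finRange q).flatMap fun i => List.replicate (a i) i := by
  rw [psiList, List.ofFn_eq_map, List.flatMap]

theorem count_psiList {q : ℕ} (a : Fin q → ℕ) (i : Fin q) : (psiList q a).count i = a i := by
  rw [psiList, List.count_flatten, List.map_ofFn, List.sum_ofFn]
  simp [List.count_replicate]

theorem psiList_sublist {q : ℕ} {a b : Fin q → ℕ} (h : ∀ i, a i ≤ b i) :
    (psiList q a).Sublist (psiList q b) := by
  rw [psiList_eq_flatMap, psiList_eq_flatMap]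
  induction List.finRange q with
  | nil => simp
  | cons i l ih =>
    rw [List.flatMap_cons, List.flatMap_cons]
    exact (List.replicate_sublist_replicate i |>.2 (h i)).append ih

theorem ofFn_psi {q n : ℕ} (a : Fin q → ℕ) (ha : ∑ i, a i = n) :
    List.ofFn (psi a ha) = psiList q a := by
  apply List.ext_get
  · simp [psiList_length a ha]
  · intro j h₁ h₂
    simp [psi]

theorem psi_injective {q n : ℕ} {a b : Fin q → ℕ} (ha : ∑ i, a i = n) (hb : ∑ i, b i = n)
    (h : psi a ha = psi b hb) : a = b := by
  funext i
  rw [← count_psiList a i, ← count_psiList b i, ← ofFn_psi a ha, ← ofFn_psi b hb, h]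

theorem lcsLen_psi {q n : ℕ} (a b : Fin q → ℕ) (ha : ∑ i, a i = n) (hb : ∑ i, b i = n) :
    lcsLen (psi a ha) (psi b hb) = ∑ i, min (a i) (b i) := by
  rw [lcsLen, ofFn_psi, ofFn_psi]
  refine IsGreatest.csSup_eq ⟨⟨psiList q fun i => min (a i) (b i), psiList_length _ rfl,
    psiList_sublist fun i => min_le_left _ _, psiList_sublist fun i => min_le_right _ _⟩, ?_⟩
  rintro _ ⟨w, rfl, hwa, hwb⟩
  have hw : w.length = ∑ i, w.count i := by
    simpa using (Multiset.sum_count_eq_card (s := Finset.univ) (m := (w : Multiset (Fin q)))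
      (fun i _ => Finset.mem_univ i)).symm
  rw [hw]
  refine Finset.sum_le_sum fun i _ => le_min ?_ ?_
  · exact (hwa.count_le i).trans_eq (count_psiList a i)
  · exact (hwb.count_le i).trans_eq (count_psiList b i)

theorem insdelDist_psi {q n : ℕ} (a b : Fin q → ℕ) (ha : ∑ i, a i = n) (hb : ∑ i, b i = n) :
    insdelDist (psi a ha) (psi b hb) = ∑ i, Nat.dist (a i) (b i) := by
  rw [insdelDist, lcsLen_psi]
  have h : ∑ i, Nat.dist (a i) (b i) + 2 * ∑ i, min (a i) (b i) = ∑ i, a i + ∑ i, b i := by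
    rw [Finset.mul_sum, ← Finset.sum_add_distrib, ← Finset.sum_add_distrib]
    refine Finset.sum_congr rfl fun i _ => ?_
    rw [Nat.dist]
    omega
  omega

/-- Corollary 4.2: a constant-weight `L¹`-code of size `M` and minimum `L¹`-distance `2δ`
yields a code in `[q]^n` of size `M` and insdel distance `2δ`. -/
theorem insdel_code_from_L1_code (q n δ M : ℕ) (hq : 2 ≤ q) (hn : 1 ≤ n)
    (A : Finset (Fin q → ℕ)) (hA : ∀ a ∈ A, ∑ i, a i = n)
    (hM : A.card = M) (h2 : 2 ≤ A.card)
    (hdist : sInf {d : ℕ | ∃ a ∈ A, ∃ b ∈ A, a ≠ b ∧ ∑ i, Nat.dist (a i) (b i) = d}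
      = 2 * δ) :
    ∃ C : Finset (Fin n → Fin q), C.card = M ∧
      insdelDistSet (C : Set (Fin n → Fin q)) = 2 * δ := by
  refine ⟨A.attach.image fun a => psi a.1 (hA a.1 a.2), ?_, ?_⟩
  · rw [Finset.card_image_of_injective, Finset.card_attach, hM]
    exact fun a b h => Subtype.ext (psi_injective _ _ h)
  · rw [← hdist, insdelDistSet]
    congr 1
    ext d
    constructor
    · rintro ⟨u, hu, v, hv, huv, rfl⟩
      simp only [Finset.coe_image, Set.mem_image, Finset.mem_coe] at hu hv
      obtain ⟨a, -, rfl⟩ := hu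
      obtain ⟨b, -, rfl⟩ := hv
      refine ⟨a.1, a.2, b.1, b.2, fun h => huv ?_, (insdelDist_psi _ _ _ _).symm⟩
      rw [Subtype.ext h]
    · rintro ⟨a, ha, b, hb, hab, rfl⟩
      exact ⟨_, Finset.mem_coe.2 (Finset.mem_image_of_mem _ (Finset.mem_attach A ⟨a, ha⟩)),
        _, Finset.mem_coe.2 (Finset.mem_image_of_mem _ (Finset.mem_attach A ⟨b, hb⟩)),
        fun h => hab (psi_injective _ _ h), insdelDist_psi _ _ _ _⟩
end
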